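/- arXiv:math/0101042 — 3 statements merged into one kernel-verified Lean document; each statement's English description precedes it below -/
import Mathlib

section
/- Chebyshev alternation characterization: Let [A,B] be a real segment with A < B, let f : [A,B] → ℝ be continuous, and let m, n be nonnegative integers. Assume f does not coincide on [A,B] with any rational function of type (n,m). Let R = P/Q be a rational function of type (n,m) on [A,B] where P and Q are coprime, P is not the zero polynomial, deg P = n − ν and deg Q = m − μ with 0 ≤ ν ≤ n and 0 ≤ μ ≤ m, and set d = min(μ, ν) and Δ = sup_{x∈[A,B]} |f(x) − R(x)|. Then R is a best approximant of type (n,m) to f on [A,B] if and only if there exist N = m + n + 2 − d points x₁ < x₂ < ⋯ < x_N in [A,B] and a sign ε ∈ {−1, +1} such that f(x_k) − R(x_k) = ε·(−1)^k·Δ for every k = 1, …, N. -/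
/-- A rational function of type (n,m) on [A,B]. -/
def IsRatFun (A B : ℝ) (n m : ℕ) (R : ℝ → ℝ) : Prop :=
  ∃ P Q : Polynomial ℝ, P.natDegree ≤ n ∧ Q.natDegree ≤ m ∧
    (∀ x ∈ Set.Icc A B, Q.eval x ≠ 0) ∧
    ∀ x ∈ Set.Icc A B, R x = P.eval x / Q.eval x

open Polynomial in
theorem cheb_solve (S T w : ℝ[X]) (M : ℕ) (h : IsCoprime S T) (hT : T ≠ 0)
    (hw : w.natDegree ≤ M + T.natDegree) (hS : S.natDegree ≤ M) :
    ∃ X Y : ℝ[X], X * S + Y * T = w ∧ X.natDegree ≤ T.natDegree ∧ Y.natDegree ≤ M := by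
  obtain ⟨a, b, hab⟩ := h
  set X := (w * a) % T with hX
  have hdm := EuclideanDomain.div_add_mod (w * a) T
  have hXd : X.natDegree ≤ T.natDegree := by
    apply natDegree_le_natDegree
    exact (EuclideanDomain.mod_lt (w * a) hT).le
  have hY : X * S + (w * b + (w * a / T) * S) * T = w := by
    have : X = w * a - T * (w * a / T) := by rw [hX]; linear_combination hdm
    rw [this]; linear_combination w * hab
  refine ⟨X, w * b + (w * a / T) * S, hY, hXd, ?_⟩
  set Y := w * b + (w * a / T) * S
  by_cases hY0 : Y = 0
  · rw [hY0]; simp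
  have h1 : Y * T = w - X * S := by linear_combination hY
  have h2 : (Y * T).natDegree = Y.natDegree + T.natDegree := natDegree_mul hY0 hT
  have h3 : (w - X * S).natDegree ≤ max w.natDegree (X * S).natDegree := natDegree_sub_le _ _
  have h4 : (X * S).natDegree ≤ X.natDegree + S.natDegree := natDegree_mul_le
  rw [← h1, h2] at h3
  rcases le_max_iff.mp h3 with h | h <;> omega

open Polynomial in
theorem cheb_count (A B : ℝ) (g : ℝ → ℝ) (hg : ContinuousOn g (Set.Icc A B)) (p : ℝ[X])
    (hp : p ≠ 0) (hz : ∀ x ∈ Set.Icc A B, g x = 0 → p.eval x = 0) (K : ℕ)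
    (x : Fin (K + 1) → ℝ) (hx : StrictMono x) (hxI : ∀ k, x k ∈ Set.Icc A B)
    (ε : ℝ) (hs : ∀ k : Fin (K + 1), 0 < ε * (-1) ^ (k : ℕ) * g (x k)) : K ≤ p.natDegree := by
  have key : ∀ i : Fin K, ∃ z, x i.castSucc < z ∧ z < x i.succ ∧ p.eval z = 0 := by
    intro i
    have hlt : x i.castSucc < x i.succ := hx (Fin.castSucc_lt_succ)
    have hsub : Set.Icc (x i.castSucc) (x i.succ) ⊆ Set.Icc A B :=
      Set.Icc_subset_Icc (hxI _).1 (hxI _).2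
    have h1 := hs i.castSucc
    have h2 := hs i.succ
    have hc : ContinuousOn (fun y => ε * (-1) ^ (i : ℕ) * g y)
        (Set.Icc (x i.castSucc) (x i.succ)) :=
      continuousOn_const.mul (hg.mono hsub)
    simp only [Fin.val_castSucc, Fin.val_succ, pow_succ] at h1 h2
    have := intermediate_value_Ioo' hlt.le hc
    have h0 : (0 : ℝ) ∈ Set.Ioo (ε * (-1) ^ (i : ℕ) * g (x i.succ))
      (ε * (-1) ^ (i : ℕ) * g (x i.castSucc)) := ⟨by linarith, h1⟩
    obtain ⟨z, hzI, hz0⟩ := this h0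
    refine ⟨z, hzI.1, hzI.2, hz z (hsub ⟨hzI.1.le, hzI.2.le⟩) ?_⟩
    have hne : ε * (-1) ^ (i : ℕ) ≠ 0 := by
      intro h; rw [h] at h1; simp at h1
    exact (mul_eq_zero.mp hz0).resolve_left hne
  choose z hz1 hz2 hz3 using key
  have hinj : Function.Injective z := by
    have : StrictMono z := by
      intro i j hij
      have : x i.succ ≤ x j.castSucc := hx.monotone (by
        rw [Fin.le_def]; simp; exact hij)
      linarith [hz2 i, hz1 j]
    exact this.injective
  have hsub : Finset.univ.image z ⊆ p.roots.toFinset := by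
    intro y hy
    simp only [Finset.mem_image, Finset.mem_univ, true_and] at hy
    obtain ⟨i, rfl⟩ := hy
    simp [hp, hz3 i]
  have h1 := Finset.card_le_card hsub
  rw [Finset.card_image_of_injective _ hinj, Finset.card_univ, Fintype.card_fin] at h1
  exact h1.trans ((Multiset.toFinset_card_le _).trans (card_roots' p))

def ChebAlt : ℕ → Set ℝ → Set ℝ → ℝ → Prop
  | 0, U, _, x => x ∈ U
  | k + 1, U, V, x => x ∈ U ∧ ∃ y, y < x ∧ ChebAlt k V U y

theorem ChebAlt.mem {k : ℕ} {U V : Set ℝ} {x : ℝ} (h : ChebAlt k U V x) : x ∈ U := by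
  cases k with
  | zero => exact h
  | succ k => exact h.1

theorem ChebAlt.mono : ∀ {k : ℕ} {U V U' V' : Set ℝ} {x : ℝ} (_ : ChebAlt k U V x)
    (_ : ∀ y ≤ x, y ∈ U → y ∈ U') (_ : ∀ y ≤ x, y ∈ V → y ∈ V'), ChebAlt k U' V' x
  | 0, _, _, _, _, x, h, hU, _ => hU x le_rfl h
  | _ + 1, _, _, _, _, x, h, hU, hV => by
    obtain ⟨h1, y, hy, h2⟩ := h
    exact ⟨hU x le_rfl h1, y, hy, h2.mono (fun z hz => hV z (hz.trans hy.le))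
      (fun z hz => hU z (hz.trans hy.le))⟩

theorem ChebAlt.seq (I : Set ℝ) (e : ℝ → ℝ) (D : ℝ) : ∀ (k : ℕ) (σ : ℝ) (_ : σ = 1 ∨ σ = -1)
    (x : ℝ) (_ : ChebAlt k {y | y ∈ I ∧ e y = σ * D} {y | y ∈ I ∧ e y = -σ * D} x),
    ∃ (s : Fin (k + 1) → ℝ) (ε : ℝ), (ε = 1 ∨ ε = -1) ∧ StrictMono s ∧ (∀ i, s i ∈ I) ∧
      (∀ i : Fin (k + 1), e (s i) = ε * (-1) ^ (i : ℕ) * D) ∧ s (Fin.last k) = x ∧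
      ε * (-1) ^ k = σ := by
  intro k
  induction k with
  | zero =>
    intro σ hσ x h
    obtain ⟨h1, h2⟩ := h
    refine ⟨fun _ => x, σ, hσ, fun i j hij => absurd hij (by omega), fun _ => h1, ?_, rfl, by simp⟩
    intro i
    simp [h2]
  | succ k ih =>
    intro σ hσ x h
    obtain ⟨⟨h1, h2⟩, y, hy, h3⟩ := h
    obtain ⟨s, ε, hε, hs, hI, he, hl, hk⟩ := ih (-σ) (by rcases hσ with h | h <;> simp [h]) y
      (by simpa using h3)
    refine ⟨Fin.snoc s x, ε, hε, ?_, ?_, ?_, by simp, ?_⟩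
    · rw [Fin.strictMono_iff_lt_succ]
      intro i
      induction i using Fin.lastCases with
      | last => 
        rw [Fin.succ_last, Fin.snoc_last, Fin.snoc_castSucc, hl]; exact hy
      | cast j =>
        rw [Fin.succ_castSucc, Fin.snoc_castSucc, Fin.snoc_castSucc]
        exact hs Fin.castSucc_lt_succ
    · intro i
      induction i using Fin.lastCases with
      | last => simpa using h1
      | cast j => simpa using hI j
    · intro i
      induction i using Fin.lastCases with
      | last => 
        simp only [Fin.snoc_last, Fin.val_last, h2, pow_succ]
        linear_combination (-D) * (-hk)
      | cast j => simpa using he j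
    · rw [pow_succ]; linear_combination -hk

open Polynomial in
theorem cheb_sep : ∀ (k : ℕ) (U V : Set ℝ) (_ : IsClosed U) (_ : BddAbove U) (_ : IsClosed V)
    (_ : Disjoint U V) (_ : ∀ x, ¬ ChebAlt k U V x),
    ∃ w : ℝ[X], w.natDegree ≤ k ∧ (∀ x ∈ U, 0 < w.eval x) ∧ (∀ x ∈ V, w.eval x < 0) := by
  intro k
  induction k with
  | zero =>
    intro U V _ _ _ _ h
    exact ⟨C (-1), by rw [natDegree_C], fun x hx => (h x hx).elim, fun x _ => by simp⟩
  | succ k ih =>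
    intro U V hU hUb hV hd h
    rcases U.eq_empty_or_nonempty with rfl | hne
    · exact ⟨C (-1), by rw [natDegree_C]; omega, fun x hx => hx.elim, fun x _ => by simp⟩
    set c := sSup U
    have hcU : c ∈ U := hU.csSup_mem hne hUb
    have hle : ∀ x ∈ U, x ≤ c := fun x hx => le_csSup hUb hx
    have hcV : c ∉ V := fun hc => Set.disjoint_left.mp hd hcU hc
    obtain ⟨δ, hδ, hball⟩ := Metric.isOpen_iff.mp hV.isOpen_compl c hcV
    set z := c + δ / 2
    have hcz : c < z := by simp only [z]; linarith
    have hVz : ∀ x ∈ V, c < x → z < x := by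
      intro x hx hcx
      by_contra hxz
      refine (hball (a := x) ?_) hx
      rw [Metric.mem_ball, Real.dist_eq, abs_of_pos (by linarith)]
      simp only [z] at hxz; linarith
    obtain ⟨w, hwd, hw1, hw2⟩ := ih (V ∩ Set.Iic c) (U ∪ Set.Ici z) (hV.inter isClosed_Iic)
      ⟨c, fun x hx => hx.2⟩ (hU.union isClosed_Ici) (by
        rw [Set.disjoint_left]
        rintro x ⟨hx1, hx2⟩ (hx | hx)
        · exact Set.disjoint_left.mp hd hx hx1
        · have h1 : x ≤ c := hx2
          have h2 : z ≤ x := hx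
          linarith) (by
        intro x hx
        have hxm := hx.mem
        have hxc : x ≤ c := hxm.2
        have hxne : x ≠ c := fun h => hcV (h ▸ hxm.1)
        refine h c ⟨hcU, x, lt_of_le_of_ne hxc hxne, hx.mono (fun y _ hy => hy.1) ?_⟩
        rintro y hyx (hy | hy)
        · exact hy
        · have h2 : z ≤ y := hy
          linarith)
    refine ⟨w * (X - C z), ?_, ?_, ?_⟩
    · refine natDegree_mul_le.trans ?_
      rw [natDegree_X_sub_C]; omega
    · intro x hx
      have h1 := hw2 x (Or.inl hx)
      have h2 := hle x hx
      simp only [eval_mul, eval_sub, eval_X, eval_C]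
      exact mul_pos_of_neg_of_neg h1 (by linarith)
    · intro x hx
      simp only [eval_mul, eval_sub, eval_X, eval_C]
      rcases le_or_gt x c with hxc | hxc
      · exact mul_neg_of_pos_of_neg (hw1 x ⟨hx, hxc⟩) (by linarith)
      · have := hVz x hx hxc
        exact mul_neg_of_neg_of_pos (hw2 x (Or.inr this.le)) (by linarith)

open Polynomial in
theorem cheb_sep_aux (k : ℕ) (U V : Set ℝ) (hU : IsClosed U) (hV : IsClosed V)
    (hVb : BddAbove V) (hd : Disjoint U V) (h1 : ∀ x, ¬ ChebAlt (k + 1) U V x)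
    (c : ℝ) (hc : c ∈ U) (hcV : ∀ x ∈ V, x ≤ c) :
    ∃ w : ℝ[X], w.natDegree ≤ k ∧ (∀ x ∈ U, 0 < w.eval x) ∧ (∀ x ∈ V, w.eval x < 0) := by
  obtain ⟨w, hw, hw1, hw2⟩ := cheb_sep k V U hV hVb hU hd.symm (by
    intro y hy
    have hyV := hy.mem
    refine h1 c ⟨hc, y, lt_of_le_of_ne (hcV y hyV) ?_, hy⟩
    rintro rfl
    exact Set.disjoint_left.mp hd hc hyV)
  exact ⟨-w, by rwa [natDegree_neg], fun x hx => by simpa using hw2 x hx,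
    fun x hx => by simpa using hw1 x hx⟩

open Polynomial in
theorem cheb_sep' (k : ℕ) (U V : Set ℝ) (hU : IsClosed U) (hUb : BddAbove U) (hV : IsClosed V)
    (hVb : BddAbove V) (hd : Disjoint U V) (h1 : ∀ x, ¬ ChebAlt (k + 1) U V x)
    (h2 : ∀ x, ¬ ChebAlt (k + 1) V U x) :
    ∃ w : ℝ[X], w.natDegree ≤ k ∧ (∀ x ∈ U, 0 < w.eval x) ∧ (∀ x ∈ V, w.eval x < 0) := by
  rcases (U ∪ V).eq_empty_or_nonempty with he | hne
  · rw [Set.union_empty_iff] at he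
    exact ⟨0, by simp, by simp [he.1], by simp [he.2]⟩
  have hb : BddAbove (U ∪ V) := hUb.union hVb
  have hc := (hU.union hV).csSup_mem hne hb
  rcases hc with hc | hc
  · exact cheb_sep_aux k U V hU hV hVb hd h1 _ hc (fun x hx => le_csSup hb (Or.inr hx))
  · obtain ⟨w, hw, hw1, hw2⟩ := cheb_sep_aux k V U hV hU hUb hd.symm h2 _ hc
      (fun x hx => le_csSup hb (Or.inl hx))
    exact ⟨-w, by rwa [natDegree_neg], fun x hx => by simpa using hw2 x hx,
      fun x hx => by simpa using hw1 x hx⟩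

open Filter Topology in
theorem cheb_perturb {X : Type*} [TopologicalSpace X] [CompactSpace X] (e w q q1 : X → ℝ)
    (he : Continuous e) (hw : Continuous w) (hq : Continuous q) (hq1 : Continuous q1)
    (hq0 : ∀ x, q x ≠ 0) (D : ℝ) (hD : 0 < D) (heD : ∀ x, |e x| ≤ D)
    (hext : ∀ x, |e x| = D → 0 < e x * w x) :
    ∃ t : ℝ, ∀ x, q x + t * q1 x ≠ 0 ∧ |e x - t * w x / (q x * (q x + t * q1 x))| < D := by
  have key : ∀ᶠ t in 𝓝 (0 : ℝ), ∀ x ∈ (Set.univ : Set X), (0 < t →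
      q x + t * q1 x ≠ 0 ∧ |e x - t * w x / (q x * (q x + t * q1 x))| < D) := by
    refine isCompact_univ.eventually_forall_of_forall_eventually ?_
    intro x _
    have hg : ContinuousAt (fun p : ℝ × X => q p.2 * (q p.2 + p.1 * q1 p.2)) (0, x) := by
      fun_prop
    have hgpos : ∀ᶠ p : ℝ × X in 𝓝 (0, x), 0 < q p.2 * (q p.2 + p.1 * q1 p.2) := by
      refine hg.eventually (lt_mem_nhds ?_)
      have := hq0 x
      simp only [zero_mul, add_zero]
      exact mul_self_pos.mpr this
    have hF : ContinuousAt (fun p : ℝ × X =>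
        e p.2 - p.1 * w p.2 / (q p.2 * (q p.2 + p.1 * q1 p.2))) (0, x) := by
      refine ContinuousAt.sub (by fun_prop) (ContinuousAt.div (by fun_prop) hg ?_)
      simp [hq0 x]
    have hF0 : (fun p : ℝ × X =>
        e p.2 - p.1 * w p.2 / (q p.2 * (q p.2 + p.1 * q1 p.2))) (0, x) = e x := by simp
    have hwc : ContinuousAt (fun p : ℝ × X => w p.2) (0, x) := by fun_prop
    have hne : ∀ a b : ℝ, 0 < a * b → b ≠ 0 := by rintro a b h rfl; simp at h
    rcases lt_or_eq_of_le (heD x) with h | h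
    · filter_upwards [hgpos, hF.abs.eventually (gt_mem_nhds (a := D) (by simpa using h))]
        with p hp1 hp2 _
      exact ⟨hne _ _ hp1, hp2⟩
    · have hx := hext x h
      rcases lt_or_ge 0 (e x) with h0 | h0
      · have hwx : 0 < w x := (pos_iff_pos_of_mul_pos hx).mp h0
        filter_upwards [hgpos, hF.eventually (lt_mem_nhds (a := -D) (by rw [hF0]; linarith)),
          hwc.eventually (lt_mem_nhds (a := (0 : ℝ)) hwx)] with p hp1 hp2 hp3 ht
        refine ⟨hne _ _ hp1, abs_lt.mpr ⟨hp2, ?_⟩⟩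
        have h1 : 0 < p.1 * w p.2 / (q p.2 * (q p.2 + p.1 * q1 p.2)) :=
          div_pos (mul_pos ht hp3) hp1
        linarith [(abs_le.mp (heD p.2)).2]
      · have hwx : w x < 0 := by
          by_contra hcon
          nlinarith
        filter_upwards [hgpos, hF.eventually (gt_mem_nhds (a := D) (by rw [hF0]; linarith)),
          hwc.eventually (gt_mem_nhds (a := (0 : ℝ)) hwx)] with p hp1 hp2 hp3 ht
        refine ⟨hne _ _ hp1, abs_lt.mpr ⟨?_, hp2⟩⟩
        have h1 : p.1 * w p.2 / (q p.2 * (q p.2 + p.1 * q1 p.2)) < 0 :=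
          div_neg_of_neg_of_pos (mul_neg_of_pos_of_neg ht hp3) hp1
        linarith [(abs_le.mp (heD p.2)).1]
  have hpos : ∀ᶠ t in 𝓝[>] (0 : ℝ), 0 < t := self_mem_nhdsWithin
  obtain ⟨t, h1, h2⟩ := ((key.filter_mono nhdsWithin_le_nhds).and hpos).exists
  exact ⟨t, fun x => h1 x trivial h2⟩

/-- Chebyshev alternation characterization of the best rational approximant. -/
theorem chebyshev_alternation_characterization
    (A B : ℝ) (hAB : A < B) (f : ℝ → ℝ) (hf : ContinuousOn f (Set.Icc A B))
    (m n ν μ : ℕ) (hν : ν ≤ n) (hμ : μ ≤ m)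
    (hfnotrat : ¬ ∃ S : ℝ → ℝ, IsRatFun A B n m S ∧ ∀ x ∈ Set.Icc A B, f x = S x)
    (P Q : Polynomial ℝ) (hcop : IsCoprime P Q) (hP0 : P ≠ 0)
    (hPdeg : P.natDegree = n - ν) (hQdeg : Q.natDegree = m - μ)
    (hQne : ∀ x ∈ Set.Icc A B, Q.eval x ≠ 0)
    (R : ℝ → ℝ) (hR : ∀ x, R x = P.eval x / Q.eval x)
    (N : ℕ) (hN : N = m + n + 2 - min μ ν)
    (Δ : ℝ) (hΔ : Δ = ⨆ y : Set.Icc A B, |f y.1 - R y.1|) :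
    (∀ S : ℝ → ℝ, IsRatFun A B n m S →
        Δ ≤ ⨆ y : Set.Icc A B, |f y.1 - S y.1|) ↔
      ∃ (x : Fin N → ℝ) (ε : ℝ), (ε = 1 ∨ ε = -1) ∧ StrictMono x ∧
        (∀ k, x k ∈ Set.Icc A B) ∧
        ∀ k : Fin N, f (x k) - R (x k) = ε * (-1) ^ (k : ℕ) * Δ := by
  have hne : Nonempty (Set.Icc A B) := ⟨⟨A, le_rfl, hAB.le⟩⟩
  have hRc : ContinuousOn R (Set.Icc A B) := by
    have : R = fun x => P.eval x / Q.eval x := funext hR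
    rw [this]
    exact P.continuous.continuousOn.div Q.continuous.continuousOn hQne
  have hbdd : ∀ S : ℝ → ℝ, ContinuousOn S (Set.Icc A B) →
      Continuous (fun y : Set.Icc A B => |f y.1 - S y.1|) := by
    intro S hS
    exact (continuousOn_iff_continuous_domRestrict.mp (hf.sub hS)).abs
  have hle : ∀ S : ℝ → ℝ, ContinuousOn S (Set.Icc A B) → ∀ y ∈ Set.Icc A B,
      |f y - S y| ≤ ⨆ y : Set.Icc A B, |f y.1 - S y.1| := by
    intro S hS y hy
    exact le_ciSup (f := fun y : Set.Icc A B => |f y.1 - S y.1|)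
      (isCompact_range (hbdd S hS)).bddAbove ⟨y, hy⟩
  have hratc : ∀ S : ℝ → ℝ, IsRatFun A B n m S → ContinuousOn S (Set.Icc A B) := by
    rintro S ⟨P1, Q1, -, -, h1, h2⟩
    exact (P1.continuous.continuousOn.div Q1.continuous.continuousOn h1).congr h2
  have hRrat : IsRatFun A B n m R :=
    ⟨P, Q, by omega, by omega, hQne, fun x _ => hR x⟩
  have hQ0 : Q ≠ 0 := by
    rintro rfl
    exact hQne A ⟨le_rfl, hAB.le⟩ (by simp)
  have hRle : ∀ y ∈ Set.Icc A B, |f y - R y| ≤ Δ := by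
    rw [hΔ]; exact hle R hRc
  have hΔpos : 0 < Δ := by
    by_contra hcon
    refine hfnotrat ⟨R, hRrat, fun x hx => ?_⟩
    have h1 := hRle x hx
    have h2 : |f x - R x| = 0 := le_antisymm (by linarith) (abs_nonneg _)
    linarith [abs_eq_zero.mp h2]
  obtain ⟨k, hk⟩ : ∃ k, k = m + n - min μ ν := ⟨_, rfl⟩
  obtain rfl : N = k + 2 := by omega
  constructor
  · intro hbest
    by_contra hno
    set I := Set.Icc A B with hI
    set e : ℝ → ℝ := fun x => f x - R x with he
    have hec : ContinuousOn e I := hf.sub hRc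
    have hcl : ∀ a : ℝ, IsClosed {y | y ∈ I ∧ e y = a} := fun a =>
      hec.preimage_isClosed_of_isClosed isClosed_Icc (isClosed_singleton (x := a))
    have hbd : ∀ a : ℝ, BddAbove {y | y ∈ I ∧ e y = a} := fun a => ⟨B, fun y hy => hy.1.2⟩
    have hnoalt : ∀ σ : ℝ, (σ = 1 ∨ σ = -1) → ∀ x,
        ¬ ChebAlt (k + 1) {y | y ∈ I ∧ e y = σ * Δ} {y | y ∈ I ∧ e y = -σ * Δ} x := by
      intro σ hσ x hx
      obtain ⟨s, ε, h1, h2, h3, h4, -, -⟩ := ChebAlt.seq I e Δ (k + 1) σ hσ x hx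
      exact hno ⟨s, ε, h1, h2, h3, h4⟩
    obtain ⟨w, hwd, hw1, hw2⟩ := cheb_sep' k _ _ (hcl (1 * Δ)) (hbd _) (hcl (-1 * Δ)) (hbd _)
      (by
        rw [Set.disjoint_left]
        rintro x ⟨-, h1⟩ ⟨-, h2⟩
        linarith) (hnoalt 1 (Or.inl rfl)) (by simpa using hnoalt (-1) (Or.inr rfl))
    obtain ⟨P1, Q1, hPQ, hP1, hQ1⟩ : ∃ P1 Q1 : Polynomial ℝ, P1 * Q - P * Q1 = w ∧
        P1.natDegree ≤ n ∧ Q1.natDegree ≤ m := by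
      rcases le_total μ ν with h | h
      · obtain ⟨X, Y, h1, h2, h3⟩ := cheb_solve P Q w n hcop hQ0 (by omega) (by omega)
        exact ⟨Y, -X, by linear_combination h1, h3, by rw [Polynomial.natDegree_neg]; omega⟩
      · obtain ⟨X, Y, h1, h2, h3⟩ := cheb_solve Q P w m hcop.symm hP0 (by omega) (by omega)
        exact ⟨X, -Y, by linear_combination h1, by omega, by rwa [Polynomial.natDegree_neg]⟩
    obtain ⟨t, ht⟩ := cheb_perturb (X := Set.Icc A B) (fun x => e x.1) (fun x => w.eval x.1)
      (fun x => Q.eval x.1) (fun x => Q1.eval x.1)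
      (continuousOn_iff_continuous_domRestrict.mp hec)
      (w.continuous.comp continuous_subtype_val) (Q.continuous.comp continuous_subtype_val)
      (Q1.continuous.comp continuous_subtype_val) (fun x => hQne x.1 x.2) Δ hΔpos
      (fun x => hRle x.1 x.2) (by
        rintro ⟨x, hx⟩ hxe
        simp only at hxe ⊢
        rcases (abs_eq hΔpos.le).mp hxe with h | h
        · have := hw1 x ⟨hx, by rw [h]; ring⟩
          rw [h]; exact mul_pos hΔpos this
        · have := hw2 x ⟨hx, by rw [h]; ring⟩
          rw [h]; exact mul_pos_of_neg_of_neg (by linarith) this)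
    have hSrat : IsRatFun A B n m
        (fun x => (P + Polynomial.C t * P1).eval x / (Q + Polynomial.C t * Q1).eval x) := by
      refine ⟨_, _, ?_, ?_, ?_, fun x _ => rfl⟩
      · refine (Polynomial.natDegree_add_le _ _).trans (max_le (by omega) ?_)
        exact (Polynomial.natDegree_C_mul_le _ _).trans hP1
      · refine (Polynomial.natDegree_add_le _ _).trans (max_le (by omega) ?_)
        exact (Polynomial.natDegree_C_mul_le _ _).trans hQ1
      · intro x hx
        simpa using (ht ⟨x, hx⟩).1
    have h1 := hbest _ hSrat
    obtain ⟨y, -, hy⟩ := isCompact_univ.exists_isMaxOn Set.univ_nonempty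
      (hbdd _ (hratc _ hSrat)).continuousOn
    have h2 := h1.trans (ciSup_le fun x => hy (Set.mem_univ x))
    have h3 := (ht y).2
    have h4 := (ht y).1
    have h5 := hQne y.1 y.2
    have hwy : w.eval y.1 = P1.eval y.1 * Q.eval y.1 - P.eval y.1 * Q1.eval y.1 := by
      rw [← hPQ]; simp
    refine absurd h2 (not_le.mpr ?_)
    have h6 : f y.1 - (P + Polynomial.C t * P1).eval y.1 / (Q + Polynomial.C t * Q1).eval y.1 =
        e y.1 - t * w.eval y.1 / (Q.eval y.1 * (Q.eval y.1 + t * Q1.eval y.1)) := by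
      simp only [he, hR, hwy, Polynomial.eval_add, Polynomial.eval_mul, Polynomial.eval_C]
      field_simp
      ring
    show |f y.1 - (P + Polynomial.C t * P1).eval y.1 / (Q + Polynomial.C t * Q1).eval y.1| < Δ
    rw [h6]
    exact h3
  · rintro ⟨x, ε, hε, hx, hxI, hxe⟩ S hS
    by_contra hcon
    push Not at hcon
    have hSc := hratc S hS
    obtain ⟨P1, Q1, hP1, hQ1, hQ1ne, hSeq⟩ := hS
    have hs : ∀ i : Fin (k + 2), 0 < ε * (-1) ^ (i : ℕ) * (S (x i) - R (x i)) := by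
      intro i
      have h1 := abs_lt.mp ((hle S hSc (x i) (hxI i)).trans_lt hcon)
      have h2 := hxe i
      have h3 : ε * (-1) ^ (i : ℕ) = 1 ∨ ε * (-1) ^ (i : ℕ) = -1 := by
        rcases hε with h | h <;> rcases neg_one_pow_eq_or ℝ (i : ℕ) with h' | h' <;>
          simp [h, h']
      rcases h3 with h3 | h3 <;> rw [h3] at h2 ⊢ <;> linarith
    have hval : ∀ y ∈ Set.Icc A B, (P1 * Q - P * Q1).eval y =
        (S y - R y) * (Q.eval y * Q1.eval y) := by
      intro y hy
      have h1 := hQne y hy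
      have h2 := hQ1ne y hy
      rw [hSeq y hy, hR]
      simp only [Polynomial.eval_sub, Polynomial.eval_mul]
      field_simp
    have hp : P1 * Q - P * Q1 ≠ 0 := by
      intro h0
      have h1 := hval (x 0) (hxI 0)
      have h2 := hs 0
      rw [h0, Polynomial.eval_zero] at h1
      have h3 := mul_ne_zero (hQne _ (hxI 0)) (hQ1ne _ (hxI 0))
      rw [(mul_eq_zero.mp h1.symm).resolve_right h3] at h2
      simp at h2
    have hcount := cheb_count A B (fun y => S y - R y) (hSc.sub hRc) _ hp
      (fun y hy h => by rw [hval y hy, h, zero_mul]) (k + 1) x hx hxI ε hs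
    have hd1 := Polynomial.natDegree_sub_le (P1 * Q) (P * Q1)
    have hd2 : (P1 * Q).natDegree ≤ _ := Polynomial.natDegree_mul_le
    have hd3 : (P * Q1).natDegree ≤ _ := Polynomial.natDegree_mul_le
    rcases le_max_iff.mp hd1 with h | h <;> omega
end

section
/- Uniqueness of the best rational approximant: Let [A,B] be a real segment with A < B, let f : [A,B] → ℝ be continuous, and let m, n be nonnegative integers. If R₁ and R₂ are both best approximants of type (n,m) to f on [A,B], then R₁(x) = R₂(x) for every x ∈ [A,B]. -/
/-- R is a best approximant of type (n,m) to f on [A,B]. -/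
def IsBestApprox (A B : ℝ) (n m : ℕ) (f R : ℝ → ℝ) : Prop :=
  IsRatFun A B n m R ∧
    ∀ S : ℝ → ℝ, IsRatFun A B n m S →
      (⨆ y : Set.Icc A B, |f y.1 - R y.1|) ≤ ⨆ y : Set.Icc A B, |f y.1 - S y.1|

open Polynomial Topology Filter

lemma key_compact {X : Type*} [TopologicalSpace X] {K : Set X} (hK : IsCompact K)
    (a : X → ℝ) (b : X × ℝ → ℝ) (ha : Continuous a)
    (hb : ∀ x ∈ K, ContinuousAt b (x, 0)) (h0 : ∀ x ∈ K, 0 ≤ a x)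
    (h1 : ∀ x ∈ K, a x = 0 → 0 < b (x, 0)) :
    ∀ᶠ t in 𝓝 (0:ℝ), ∀ x ∈ K, 0 < t → 0 < a x + t * b (x, t) := by
  refine hK.eventually_forall_of_forall_eventually (x₀ := (0:ℝ))
    (P := fun t x => x ∈ K → 0 < t → 0 < a x + t * b (x, t)) ?_ |>.mono
      (fun t h x hx => h x hx hx)
  intro x hx
  have hb' : ContinuousAt (fun z : ℝ × X => b (z.2, z.1)) (0, x) :=
    ContinuousAt.comp (f := fun z : ℝ × X => (z.2, z.1)) (g := b) (x := (0, x)) (hb x hx)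
      (continuous_snd.prodMk continuous_fst).continuousAt
  have ha' : ContinuousAt (fun z : ℝ × X => a z.2) (0, x) :=
    (ha.comp continuous_snd).continuousAt
  rcases (h0 x hx).eq_or_lt with h | h
  · have hp : 0 < b (x, 0) := h1 x hx h.symm
    have hnn : ∀ᶠ z : ℝ × X in 𝓝 (0, x), 0 < b (z.2, z.1) := hb'.eventually_const_lt hp
    filter_upwards [hnn] with z hz hzK hz0
    exact add_pos_of_nonneg_of_pos (h0 _ hzK) (mul_pos hz0 hz)
  · have hc : ContinuousAt (fun z : ℝ × X => a z.2 + z.1 * b (z.2, z.1)) (0, x) :=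
      ha'.add (continuousAt_fst.mul hb')
    exact (hc.eventually_const_lt (u := 0) (by simpa using h)).mono (fun z hz _ _ => hz)

lemma coprime_repr (U W g : ℝ[X]) (n m : ℕ) (hc : IsCoprime U W) (hW : W ≠ 0)
    (hU : U.natDegree ≤ n) (hWm : W.natDegree ≤ m) (hg : g.natDegree ≤ n + W.natDegree) :
    ∃ P Q : ℝ[X], P.natDegree ≤ n ∧ Q.natDegree ≤ m ∧ g = P * W + Q * U := by
  obtain ⟨a, b, hab⟩ := hc
  have hq : ((g * a) % W).natDegree ≤ W.natDegree := by
    by_cases h : (g * a) % W = 0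
    · simp [h]
    · exact natDegree_le_natDegree (EuclideanDomain.mod_lt (g * a) hW).le
  have hid : g = (g * b + ((g * a) / W) * U) * W + ((g * a) % W) * U := by
    have := EuclideanDomain.div_add_mod (g * a) W
    calc g = g * (a * U + b * W) := by rw [hab, mul_one]
      _ = (g * a) * U + g * b * W := by ring
      _ = (W * (g * a / W) + g * a % W) * U + g * b * W := by rw [this]
      _ = _ := by ring
  refine ⟨g * b + ((g * a) / W) * U, (g * a) % W, ?_, hq.trans hWm, hid⟩
  generalize g * b + ((g * a) / W) * U = P at *
  generalize (g * a) % W = Q at *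
  by_cases hP : P = 0
  · simp [hP]
  have h1 : (P * W).natDegree ≤ n + W.natDegree := by
    have : P * W = g - Q * U := by rw [hid]; ring
    rw [this]
    refine (natDegree_sub_le _ _).trans (max_le hg ?_)
    refine natDegree_mul_le.trans ?_
    omega
  rw [natDegree_mul hP hW] at h1
  omega

lemma IsRatFun.normal {A B : ℝ} (hAB : A < B) {n m : ℕ} {R : ℝ → ℝ} (h : IsRatFun A B n m R) :
    ∃ P Q : ℝ[X], P.natDegree ≤ n ∧ Q.natDegree ≤ m ∧ IsCoprime P Q ∧
    (∀ x ∈ Set.Icc A B, 0 < Q.eval x) ∧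
    ∀ x ∈ Set.Icc A B, R x = P.eval x / Q.eval x := by
  obtain ⟨P, Q, hP, hQ, hne, hR⟩ := h
  have hA : A ∈ Set.Icc A B := ⟨le_rfl, hAB.le⟩
  have hQ0 : Q ≠ 0 := by
    rintro rfl
    exact hne A hA (by simp)
  obtain ⟨P', hP'⟩ := EuclideanDomain.gcd_dvd_left P Q
  obtain ⟨Q', hQ'⟩ := EuclideanDomain.gcd_dvd_right P Q
  have hG : EuclideanDomain.gcd P Q ≠ 0 := by
    intro h0
    rw [h0, zero_mul] at hQ'
    exact hQ0 hQ'
  have hc : IsCoprime P' Q' := by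
    have e := EuclideanDomain.gcd_eq_gcd_ab P Q
    refine ⟨EuclideanDomain.gcdA P Q, EuclideanDomain.gcdB P Q, ?_⟩
    apply mul_left_cancel₀ hG
    calc _ = (EuclideanDomain.gcd P Q * P') * EuclideanDomain.gcdA P Q +
          (EuclideanDomain.gcd P Q * Q') * EuclideanDomain.gcdB P Q := by ring
      _ = _ := by rw [← hP', ← hQ', ← e, mul_one]
  generalize EuclideanDomain.gcd P Q = G at *
  subst hP' hQ'
  have hQ'0 : Q' ≠ 0 := right_ne_zero_of_mul hQ0
  have dP : P'.natDegree ≤ n := by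
    by_cases h0 : P' = 0
    · simp [h0]
    · rw [natDegree_mul hG h0] at hP; omega
  have dQ : Q'.natDegree ≤ m := by
    rw [natDegree_mul hG hQ'0] at hQ; omega
  have hne' : ∀ x ∈ Set.Icc A B, Q'.eval x ≠ 0 := fun x hx h0 => hne x hx (by simp [h0])
  have hR' : ∀ x ∈ Set.Icc A B, R x = P'.eval x / Q'.eval x := by
    intro x hx
    have : G.eval x ≠ 0 := fun h0 => hne x hx (by simp [h0])
    rw [hR x hx, eval_mul, eval_mul, mul_div_mul_left _ _ this]
  have hs : (∀ x ∈ Set.Icc A B, 0 < Q'.eval x) ∨ (∀ x ∈ Set.Icc A B, Q'.eval x < 0) := by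
    by_contra! hcon
    obtain ⟨⟨x, hx, hx'⟩, y, hy, hy'⟩ := hcon
    have := isPreconnected_Icc.intermediate_value hx hy (f := fun x => Q'.eval x)
      Q'.continuous.continuousOn
    obtain ⟨z, hz, hz0⟩ := this ⟨hx', hy'⟩
    exact hne' z hz hz0
  rcases hs with hs | hs
  · exact ⟨P', Q', dP, dQ, hc, hs, hR'⟩
  · refine ⟨-P', -Q', by simpa, by simpa, hc.neg_neg, ?_, ?_⟩
    · intro x hx; simpa using hs x hx
    · intro x hx; simpa using hR' x hx

/-- Uniqueness of the best rational approximant of type (n,m). -/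
theorem best_rational_approximant_unique
    (A B : ℝ) (hAB : A < B) (f : ℝ → ℝ) (hf : ContinuousOn f (Set.Icc A B))
    (m n : ℕ) (R₁ R₂ : ℝ → ℝ)
    (h₁ : IsBestApprox A B n m f R₁) (h₂ : IsBestApprox A B n m f R₂) :
    ∀ x ∈ Set.Icc A B, R₁ x = R₂ x := by
  obtain ⟨r1, b1⟩ := h₁
  obtain ⟨r2, b2⟩ := h₂
  have hE21 := b2 R₁ r1
  obtain ⟨P1, Q1, hP1, hQ1, hc, hpos1, hR1⟩ := r1.normal hAB
  obtain ⟨P2, Q2, hP2, hQ2, -, hpos2, hR2⟩ := r2.normal hAB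
  have hne : Nonempty (Set.Icc A B) := ⟨⟨A, le_rfl, hAB.le⟩⟩
  have hfc : Continuous (fun x : Set.Icc A B => f x.1) := continuousOn_iff_continuous_domRestrict.1 hf
  have hpc : ∀ p : ℝ[X], Continuous (fun x : Set.Icc A B => p.eval x.1) := fun p =>
    p.continuous.comp continuous_subtype_val
  have hcont : ∀ (R : ℝ → ℝ) (P Q : ℝ[X]), (∀ x ∈ Set.Icc A B, Q.eval x ≠ 0) →
      (∀ x ∈ Set.Icc A B, R x = P.eval x / Q.eval x) →
      Continuous (fun x : Set.Icc A B => f x.1 - R x.1) := by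
    intro R P Q h1 h2
    have : (fun x : Set.Icc A B => f x.1 - R x.1) =
        fun x : Set.Icc A B => f x.1 - P.eval x.1 / Q.eval x.1 := by
      funext x; rw [h2 x.1 x.2]
    rw [this]
    exact hfc.sub ((hpc P).div (hpc Q) (fun x => h1 x.1 x.2))
  have hle : ∀ u : Set.Icc A B → ℝ, Continuous u → ∀ x, |u x| ≤ ⨆ y, |u y| := by
    intro u hu x
    exact le_ciSup (f := fun y => |u y|) (isCompact_range hu.abs).bddAbove x
  have c1 := hcont R₁ P1 Q1 (fun x hx => (hpos1 x hx).ne') hR1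
  have c2 := hcont R₂ P2 Q2 (fun x hx => (hpos2 x hx).ne') hR2
  have l1 := hle _ c1
  have l2 : ∀ x : Set.Icc A B, |f x.1 - R₂ x.1| ≤ _ := fun x => (hle _ c2 x).trans hE21
  set E := ⨆ y : Set.Icc A B, |f y.1 - R₁ y.1| with hE
  set w := P2 * Q1 - P1 * Q2 with hw
  by_contra! hcon
  obtain ⟨x0, hx0, hx0ne⟩ := hcon
  have hE0 : 0 < E := by
    rcases ((abs_nonneg _).trans (l1 ⟨x0, hx0⟩)).lt_or_eq with h | h
    · exact h
    · exfalso
      have a1 := l1 ⟨x0, hx0⟩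
      have a2 := l2 ⟨x0, hx0⟩
      rw [← h] at a1 a2
      have a1 := abs_nonpos_iff.1 a1
      have a2 := abs_nonpos_iff.1 a2
      apply hx0ne
      simp only at a1 a2
      linarith
  have hwd : ∀ x ∈ Set.Icc A B, w.eval x = (R₂ x - R₁ x) * (Q1.eval x * Q2.eval x) := by
    intro x hx
    have q1 := (hpos1 x hx).ne'
    have q2 := (hpos2 x hx).ne'
    rw [hR1 x hx, hR2 x hx, hw]
    simp only [eval_sub, eval_mul]
    field_simp
  have hw0 : w ≠ 0 := by
    intro h0
    have := hwd x0 hx0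
    rw [h0, eval_zero, eq_comm] at this
    rcases mul_eq_zero.1 this with h | h
    · exact hx0ne (by linarith)
    · exact (mul_pos (hpos1 x0 hx0) (hpos2 x0 hx0)).ne' h
  have hQ10 : Q1 ≠ 0 := by
    rintro rfl
    simpa using hpos1 x0 hx0
  -- interpolation
  set g : ℝ[X] := Lagrange.interpolate w.roots.toFinset id (fun z => f z - R₁ z) with hg
  have hgd : g.natDegree ≤ w.natDegree := by
    have h1 : g.degree < w.roots.toFinset.card :=
      Lagrange.degree_interpolate_lt _ (Function.injective_id.injOn)
    have h2 : w.roots.toFinset.card ≤ w.natDegree :=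
      (Multiset.toFinset_card_le _).trans (card_roots' w)
    exact natDegree_le_of_degree_le (h1.le.trans (by exact_mod_cast h2))
  have hgz : ∀ z, w.eval z = 0 → g.eval z = f z - R₁ z := by
    intro z hz
    have : z ∈ w.roots.toFinset := by simp [hw0, hz]
    have h := Lagrange.eval_interpolate_at_node (v := id) (fun z => f z - R₁ z)
      (Function.injective_id.injOn) this
    exact h
  -- step 1
  have hK : IsCompact {x : Set.Icc A B | (f x.1 - R₁ x.1)^2 = E^2} :=
    (isClosed_eq (c1.pow 2) continuous_const).isCompact
  have s1 := key_compact hK (fun x => (f x.1 - R₁ x.1) * w.eval x.1)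
    (fun p => (f p.1.1 - R₁ p.1.1) * g.eval p.1.1) (c1.mul (hpc w))
    (fun x _ => ((c1.mul (hpc g)).comp continuous_fst).continuousAt)
    (by
      intro x hx
      have hx : (f x.1 - R₁ x.1)^2 = E^2 := hx
      rw [hwd x.1 x.2, ← mul_assoc]
      refine mul_nonneg ?_ (mul_pos (hpos1 x.1 x.2) (hpos2 x.1 x.2)).le
      have h2 := sq_le_sq' (abs_le.1 (l2 x)).1 (abs_le.1 (l2 x)).2
      nlinarith [sq_nonneg (R₂ x.1 - R₁ x.1)])
    (by
      intro x hx h0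
      have hx : (f x.1 - R₁ x.1)^2 = E^2 := hx
      have hn : f x.1 - R₁ x.1 ≠ 0 := by
        intro h
        rw [h] at hx
        nlinarith
      have hz := (mul_eq_zero.1 h0).resolve_left hn
      simp only
      rw [hgz _ hz]
      exact mul_self_pos.2 hn)
  obtain ⟨ε, hε, hε0⟩ := ((s1.filter_mono nhdsWithin_le_nhds).and
    (self_mem_nhdsWithin : Set.Ioi (0:ℝ) ∈ 𝓝[>] 0)).exists
  have hε0 : 0 < ε := hε0
  set v := w + C ε * g with hv
  have hvd : v.natDegree ≤ w.natDegree :=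
    (natDegree_add_le _ _).trans (max_le le_rfl ((natDegree_C_mul_le _ _).trans hgd))
  have hvpos : ∀ x : Set.Icc A B, (f x.1 - R₁ x.1)^2 = E^2 → 0 < (f x.1 - R₁ x.1) * v.eval x.1 := by
    intro x hx
    have := hε x hx hε0
    simp only [hv, eval_add, eval_mul, eval_C]
    linarith
  -- representation
  have hrep : ∃ P Q : ℝ[X], P.natDegree ≤ n ∧ Q.natDegree ≤ m ∧ v = P * Q1 - P1 * Q := by
    by_cases hcase : w.natDegree ≤ n + Q1.natDegree
    · obtain ⟨P, Q, hP, hQ, h⟩ := coprime_repr P1 Q1 v n m hc hQ10 hP1 hQ1 (hvd.trans hcase)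
      exact ⟨P, -Q, hP, by simpa, by rw [h]; ring⟩
    · have e1 : (P2 * Q1).natDegree ≤ n + Q1.natDegree :=
        natDegree_mul_le.trans (by omega)
      have e2 : (P1 * Q2).natDegree ≤ m + P1.natDegree :=
        natDegree_mul_le.trans (by omega)
      have e3 := natDegree_sub_le (P2 * Q1) (P1 * Q2)
      rw [← hw] at e3
      have hP10 : P1 ≠ 0 := by
        rintro rfl
        apply hcase
        rw [hw]
        simpa using e1
      have e4 : v.natDegree ≤ m + P1.natDegree := by
        rcases le_max_iff.1 e3 with h | h <;> omega
      obtain ⟨P, Q, hP, hQ, h⟩ := coprime_repr Q1 P1 v m n hc.symm hP10 hQ1 hP1 e4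
      exact ⟨Q, -P, hQ, by simpa, by rw [h]; ring⟩
  obtain ⟨P, Q, hP, hQ, hvPQ⟩ := hrep
  -- step 2
  have s2 := key_compact (isCompact_univ (X := Set.Icc A B)) (fun x => (Q1.eval x.1)^2)
    (fun p => 2 * Q1.eval p.1.1 * Q.eval p.1.1 + p.2 * (Q.eval p.1.1)^2) ((hpc Q1).pow 2)
    (fun x _ => by
      have := (hpc Q1).comp (continuous_fst (X := Set.Icc A B) (Y := ℝ))
      have := (hpc Q).comp (continuous_fst (X := Set.Icc A B) (Y := ℝ))
      apply Continuous.continuousAt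
      simp only [Function.comp_def] at *
      fun_prop)
    (fun x _ => sq_nonneg _)
    (fun x _ h => absurd h (pow_pos (hpos1 x.1 x.2) 2).ne')
  have s3 := key_compact (isCompact_univ (X := Set.Icc A B))
    (fun x => E^2 - (f x.1 - R₁ x.1)^2)
    (fun p => 2 * ((f p.1.1 - R₁ p.1.1) * v.eval p.1.1) /
        (Q1.eval p.1.1 * (Q1.eval p.1.1 + p.2 * Q.eval p.1.1))
      - p.2 * (v.eval p.1.1 / (Q1.eval p.1.1 * (Q1.eval p.1.1 + p.2 * Q.eval p.1.1)))^2)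
    (continuous_const.sub (c1.pow 2))
    (fun x _ => by
      have k1 := ((hpc Q1).comp (continuous_fst (X := Set.Icc A B) (Y := ℝ))).continuousAt (x := (x, 0))
      have k2 := ((hpc Q).comp (continuous_fst (X := Set.Icc A B) (Y := ℝ))).continuousAt (x := (x, 0))
      have k3 := ((hpc v).comp (continuous_fst (X := Set.Icc A B) (Y := ℝ))).continuousAt (x := (x, 0))
      have k4 := (c1.comp (continuous_fst (X := Set.Icc A B) (Y := ℝ))).continuousAt (x := (x, 0))
      have k5 := (continuous_snd (X := Set.Icc A B) (Y := ℝ)).continuousAt (x := (x, 0))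
      have kD := k1.mul (k1.add (k5.mul k2))
      have hD : Q1.eval x.1 * (Q1.eval x.1 + 0 * Q.eval x.1) ≠ 0 := by
        have := (hpos1 x.1 x.2).ne'
        simpa using this
      exact ((continuousAt_const.mul (k4.mul k3)).div kD hD).sub (k5.mul ((k3.div kD hD).pow 2)))
    (fun x _ => by
      have := sq_le_sq' (abs_le.1 (l1 x)).1 (abs_le.1 (l1 x)).2
      linarith)
    (fun x _ h => by
      have h1 := hvpos x (by linarith)
      have h2 := hpos1 x.1 x.2
      simp only [zero_mul, add_zero, sub_zero]
      positivity)
  obtain ⟨t, ⟨ht2, ht3⟩, ht0⟩ := (((s2.and s3).filter_mono nhdsWithin_le_nhds).and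
    (self_mem_nhdsWithin : Set.Ioi (0:ℝ) ∈ 𝓝[>] 0)).exists
  have ht0 : 0 < t := ht0
  have hden : ∀ x ∈ Set.Icc A B, (Q1 + C t * Q).eval x ≠ 0 := by
    intro x hx h0
    have := ht2 ⟨x, hx⟩ trivial ht0
    simp only [eval_add, eval_mul, eval_C] at h0
    simp only at this
    have e : eval x Q1 ^ 2 + t * (2 * eval x Q1 * eval x Q + t * eval x Q ^ 2) =
      (eval x Q1 + t * eval x Q)^2 := by ring
    rw [e, h0] at this
    simp at this
  set S : ℝ → ℝ := fun x => (P1 + C t * P).eval x / (Q1 + C t * Q).eval x with hS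
  have hSr : IsRatFun A B n m S := by
    refine ⟨P1 + C t * P, Q1 + C t * Q, ?_, ?_, hden, fun x _ => rfl⟩
    · exact (natDegree_add_le _ _).trans (max_le hP1 ((natDegree_C_mul_le _ _).trans hP))
    · exact (natDegree_add_le _ _).trans (max_le hQ1 ((natDegree_C_mul_le _ _).trans hQ))
  have cS := hcont S _ _ hden (fun x _ => rfl)
  have hlt : ∀ x : Set.Icc A B, |f x.1 - S x.1| < E := by
    intro x
    have h3 := ht3 x trivial ht0
    simp only at h3
    have hd := hden x.1 x.2
    have hq := (hpos1 x.1 x.2).ne'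
    have hSx : S x.1 = R₁ x.1 + t * (v.eval x.1 / (Q1.eval x.1 * (Q1.eval x.1 + t * Q.eval x.1))) := by
      rw [hR1 x.1 x.2, hS, hvPQ]
      simp only [eval_add, eval_mul, eval_C, eval_sub] at hd ⊢
      field_simp
      ring
    rw [hSx]
    rw [mul_div_assoc, mul_div_assoc] at h3
    apply abs_lt_of_sq_lt_sq _ hE0.le
    nlinarith
  obtain ⟨y, -, hy⟩ := (isCompact_univ (X := Set.Icc A B)).exists_isMaxOn Set.univ_nonempty
    cS.abs.continuousOn
  have := b1 S hSr
  have h4 : (⨆ y : Set.Icc A B, |f y.1 - S y.1|) ≤ |f y.1 - S y.1| :=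
    ciSup_le (fun z => hy (Set.mem_univ z))
  linarith [hlt y]
end

section
/- Best rational approximants to odd functions are odd: Let B > 0, let f : [−B,B] → ℝ be continuous with f(−x) = −f(x) for all x ∈ [−B,B], and let m, n be nonnegative integers. If R is a best approximant of type (n,m) to f on [−B,B], then R(−x) = −R(x) for every x ∈ [−B,B]. -/
open Polynomial in
lemma bezout_deg (P0 Q0 h : ℝ[X]) (n m : ℕ) (hc : IsCoprime P0 Q0) (hQ0 : Q0 ≠ 0)
    (ha : P0.natDegree ≤ n) (hb : Q0.natDegree ≤ m) 
    (hh : h.natDegree ≤ n + Q0.natDegree) :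
    ∃ p q : ℝ[X], p.natDegree ≤ n ∧ q.natDegree ≤ m ∧ h = p * Q0 + q * P0 := by
  obtain ⟨u, v, huv⟩ := hc
  set w := (h * u) % Q0 with hw
  have hdiv : Q0 * ((h * u) / Q0) + w = h * u := EuclideanDomain.div_add_mod _ _
  have hwd : w.degree < Q0.degree := EuclideanDomain.mod_lt _ hQ0
  have hwn : w.natDegree ≤ Q0.natDegree := natDegree_le_natDegree hwd.le
  refine ⟨h * v + (h * u) / Q0 * P0, w, ?_, hwn.trans hb, ?_⟩
  · set p := h * v + (h * u) / Q0 * P0 with hp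
    have e : p * Q0 = h - w * P0 := by
      rw [hp]; linear_combination h * huv + P0 * hdiv
    have h1 : (p * Q0).natDegree ≤ n + Q0.natDegree := by
      rw [e]
      refine (natDegree_sub_le _ _).trans (max_le hh ?_)
      refine natDegree_mul_le.trans ?_
      omega
    by_cases hp0 : p = 0
    · simp [hp0]
    rw [natDegree_mul hp0 hQ0] at h1
    omega
  · linear_combination -h * huv - P0 * hdiv

open Polynomial in
lemma bezout_deg2 (P0 Q0 P Q h : ℝ[X]) (n m : ℕ) (hc : IsCoprime P0 Q0) (hQ0 : Q0 ≠ 0)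
    (ha : P0.natDegree ≤ n) (hb : Q0.natDegree ≤ m) 
    (hP : P.natDegree ≤ n) (hQ : Q.natDegree ≤ m) 
    (hh : h.natDegree ≤ (P * Q0 - Q * P0).natDegree) :
    ∃ p q : ℝ[X], p.natDegree ≤ n ∧ q.natDegree ≤ m ∧ h = p * Q0 - q * P0 := by
  have h1 : (P * Q0).natDegree ≤ n + Q0.natDegree := natDegree_mul_le.trans (by omega)
  have h2 : (Q * P0).natDegree ≤ m + P0.natDegree := natDegree_mul_le.trans (by omega)
  have h3 := natDegree_sub_le (P * Q0) (Q * P0)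
  by_cases hP0 : P0 = 0
  · subst hP0
    simp only [mul_zero, sub_zero] at hh
    obtain ⟨p, q, hp, hq, e⟩ := bezout_deg 0 Q0 h n m hc hQ0 ha hb (hh.trans h1)
    exact ⟨p, q, hp, hq, by simpa using e⟩
  by_cases hcase : m + P0.natDegree ≤ n + Q0.natDegree
  · obtain ⟨p, q, hp, hq, e⟩ := bezout_deg P0 Q0 h n m hc hQ0 ha hb 
      (hh.trans (h3.trans (max_le h1 (h2.trans hcase))))
    exact ⟨p, -q, hp, by simpa using hq, by rw [e]; ring⟩
  · obtain ⟨p, q, hp, hq, e⟩ := bezout_deg Q0 P0 h m n hc.symm hP0 hb ha 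
      (hh.trans (h3.trans (max_le (h1.trans (by omega)) h2)))
    exact ⟨q, -p, hq, by simpa using hp, by rw [e]; ring⟩

open Topology Filter in
lemma perturb {K : Type*} [TopologicalSpace K] [CompactSpace K] (e h a b : K → ℝ)
    (he : Continuous e) (hh : Continuous h) (ha : Continuous a) (hb : Continuous b)
    (hapos : ∀ x, 0 < a x) (E : ℝ) (heE : ∀ x, |e x| ≤ E)
    (hext : ∀ x, |e x| = E → 0 < e x * h x) :
    ∃ ε : ℝ, (∀ x, 0 < a x + ε * b x) ∧
      ∀ x, |e x - ε * (h x / (a x * (a x + ε * b x)))| < E := by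
  have key : ∀ᶠ ε in 𝓝 (0:ℝ), ∀ x ∈ (Set.univ : Set K), 0 < a x + ε * b x ∧
      (0 < ε → |e x - ε * (h x / (a x * (a x + ε * b x)))| < E) := by
    apply isCompact_univ.eventually_forall_of_forall_eventually
    intro x _
    have c1 : ContinuousAt (fun z : ℝ × K => a z.2 + z.1 * b z.2) (0, x) := by fun_prop
    have c2 : ContinuousAt (fun z : ℝ × K => h z.2 / (a z.2 * (a z.2 + z.1 * b z.2))) (0, x) := by
      have := hapos x
      refine ContinuousAt.div (by fun_prop) (by fun_prop) ?_
      simp [this.ne']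
    have c0 : ContinuousAt (fun z : ℝ × K => e z.2) (0, x) := by fun_prop
    have e1 : ∀ᶠ z : ℝ × K in 𝓝 (0, x), 0 < a z.2 + z.1 * b z.2 :=
      c1.eventually (lt_mem_nhds (by simpa using hapos x))
    rcases (heE x).lt_or_eq with hlt | heq
    · have c3 : ContinuousAt (fun z : ℝ × K =>
          |e z.2 - z.1 * (h z.2 / (a z.2 * (a z.2 + z.1 * b z.2)))|) (0, x) :=
        (c0.sub (continuousAt_fst.mul c2)).abs
      have e2 := c3.eventually (Iio_mem_nhds (show _ < E by simpa using hlt))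
      filter_upwards [e1, e2] with z h1 h2 using ⟨h1, fun _ => h2⟩
    · have c3 : ContinuousAt (fun z : ℝ × K =>
          -2 * e z.2 * (h z.2 / (a z.2 * (a z.2 + z.1 * b z.2))) + 
            z.1 * (h z.2 / (a z.2 * (a z.2 + z.1 * b z.2)))^2) (0, x) :=
        ((continuousAt_const.mul c0).mul c2).add (continuousAt_fst.mul (c2.pow 2))
      have hneg : -2 * e x * (h x / (a x * (a x + 0 * b x))) + 
            0 * (h x / (a x * (a x + 0 * b x)))^2 < 0 := by
        have h1 := hext x heq
        have h2 := hapos x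
        have h3 : 0 < e x * h x / (a x * a x) := by positivity
        have : -2 * e x * (h x / (a x * (a x + 0 * b x))) + 
            0 * (h x / (a x * (a x + 0 * b x)))^2 = -2 * (e x * h x / (a x * a x)) := by
          simp; ring
        linarith
      have e2 := c3.eventually (Iio_mem_nhds hneg)
      filter_upwards [e1, e2] with z h1 h2
      refine ⟨h1, fun hz => ?_⟩
      have hE : 0 ≤ E := (abs_nonneg _).trans (heE x)
      apply abs_lt_of_sq_lt_sq _ hE
      have h4 : (e z.2)^2 ≤ E^2 := by
        rw [← sq_abs]; exact pow_le_pow_left₀ (abs_nonneg _) (heE z.2) 2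
      have h5 := mul_neg_of_pos_of_neg hz h2
      nlinarith
  have k2 : ∀ᶠ ε in 𝓝[>] (0:ℝ), ∀ x ∈ (Set.univ : Set K), 0 < a x + ε * b x ∧
      (0 < ε → |e x - ε * (h x / (a x * (a x + ε * b x)))| < E) := key.filter_mono nhdsWithin_le_nhds
  obtain ⟨ε, h1, h2⟩ := (k2.and self_mem_nhdsWithin).exists
  exact ⟨ε, fun x => (h1 x trivial).1, fun x => (h1 x trivial).2 h2⟩

open Polynomial in
lemma same_sign (B : ℝ) (Q : ℝ[X]) (hQ : ∀ x ∈ Set.Icc (-B) B, Q.eval x ≠ 0) :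
    (∀ x ∈ Set.Icc (-B) B, 0 < Q.eval x) ∨ (∀ x ∈ Set.Icc (-B) B, 0 < (-Q).eval x) := by
  by_contra hcon
  push Not at hcon
  obtain ⟨⟨x, hx, hx'⟩, y, hy, hy'⟩ := hcon
  rw [eval_neg] at hy'
  obtain ⟨z, hz, hz'⟩ := isPreconnected_Icc.intermediate_value hx hy Q.continuous.continuousOn
    (show (0:ℝ) ∈ Set.Icc (Q.eval x) (Q.eval y) from ⟨hx', by linarith⟩)
  exact hQ z hz hz'

open Polynomial in
/-- Normalised representation with positive denominator. -/
lemma pos_rep (B : ℝ) (n m : ℕ) (R : ℝ → ℝ) (h : IsRatFun (-B) B n m R) :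
    ∃ P Q : ℝ[X], P.natDegree ≤ n ∧ Q.natDegree ≤ m ∧
    (∀ x ∈ Set.Icc (-B) B, 0 < Q.eval x) ∧
    ∀ x ∈ Set.Icc (-B) B, R x = P.eval x / Q.eval x := by
  obtain ⟨P, Q, hP, hQ, h0, hR⟩ := h
  rcases same_sign B Q h0 with h | h
  · exact ⟨P, Q, hP, hQ, h, hR⟩
  · exact ⟨-P, -Q, by simpa using hP, by simpa using hQ, h, fun x hx => by simp [hR x hx]⟩

open Polynomial in
lemma coprime_rep (B : ℝ) (hB : 0 < B) (n m : ℕ) (R : ℝ → ℝ) (h : IsRatFun (-B) B n m R) :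
    ∃ P Q : ℝ[X], IsCoprime P Q ∧ P.natDegree ≤ n ∧ Q.natDegree ≤ m ∧
    (∀ x ∈ Set.Icc (-B) B, 0 < Q.eval x) ∧
    ∀ x ∈ Set.Icc (-B) B, R x = P.eval x / Q.eval x := by
  obtain ⟨P, Q, hP, hQ, h0, hR⟩ := h
  have hQ0 : Q ≠ 0 := by
    rintro rfl
    exact h0 0 ⟨by linarith, hB.le⟩ (by simp)
  obtain ⟨P1, hP1⟩ := EuclideanDomain.gcd_dvd_left P Q
  obtain ⟨Q1, hQ1⟩ := EuclideanDomain.gcd_dvd_right P Q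
  set g := EuclideanDomain.gcd P Q with hg
  have hg0 : g ≠ 0 := by
    intro h; rw [h, zero_mul] at hQ1; exact hQ0 hQ1
  have hQ10 : Q1 ≠ 0 := by
    rintro rfl; rw [mul_zero] at hQ1; exact hQ0 hQ1
  have hc : IsCoprime P1 Q1 := by
    refine ⟨EuclideanDomain.gcdA P Q, EuclideanDomain.gcdB P Q, ?_⟩
    have := EuclideanDomain.gcd_eq_gcd_ab P Q
    apply mul_left_cancel₀ hg0
    rw [← hg] at this
    linear_combination -this - EuclideanDomain.gcdA P Q * hP1 - EuclideanDomain.gcdB P Q * hQ1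
  have dP : P1.natDegree ≤ n := by
    by_cases hP10 : P1 = 0
    · simp [hP10]
    rw [hP1, natDegree_mul hg0 hP10] at hP
    omega
  have dQ : Q1.natDegree ≤ m := by
    rw [hQ1, natDegree_mul hg0 hQ10] at hQ
    omega
  have hne : ∀ x ∈ Set.Icc (-B) B, g.eval x ≠ 0 ∧ Q1.eval x ≠ 0 := by
    intro x hx
    have := h0 x hx
    rw [hQ1, eval_mul] at this
    exact mul_ne_zero_iff.mp this
  have hR1 : ∀ x ∈ Set.Icc (-B) B, R x = P1.eval x / Q1.eval x := by
    intro x hx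
    rw [hR x hx, hP1, hQ1, eval_mul, eval_mul, mul_div_mul_left _ _ (hne x hx).1]
  rcases same_sign B Q1 (fun x hx => (hne x hx).2) with h | h
  · exact ⟨P1, Q1, hc, dP, dQ, h, hR1⟩
  · exact ⟨-P1, -Q1, hc.neg_neg, by simpa using dP, by simpa using dQ, h,
      fun x hx => by simp [hR1 x hx]⟩

lemma bdd (B : ℝ) (n m : ℕ) (f : ℝ → ℝ) (hf : ContinuousOn f (Set.Icc (-B) B)) (R : ℝ → ℝ)
    (h : IsRatFun (-B) B n m R) :
    Continuous (fun y : Set.Icc (-B) B => f y.1 - R y.1) := by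
  obtain ⟨P, Q, hP, hQ, h0, hR⟩ := h
  have : ContinuousOn R (Set.Icc (-B) B) := by
    refine ContinuousOn.congr ?_ hR
    exact P.continuous.continuousOn.div Q.continuous.continuousOn h0
  exact continuousOn_iff_continuous_domRestrict.mp (hf.sub this)

open Polynomial in
lemma key_lemma (B : ℝ) (hB : 0 < B) (f : ℝ → ℝ) (hf : ContinuousOn f (Set.Icc (-B) B))
    (m n : ℕ) (R S : ℝ → ℝ) (hR : IsRatFun (-B) B n m R) (hS : IsRatFun (-B) B n m S)
    (E : ℝ) (hE : 0 < E) (hSE : ∀ x ∈ Set.Icc (-B) B, |f x - S x| ≤ E)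
    (hbest : ∀ T : ℝ → ℝ, IsRatFun (-B) B n m T →
      E ≤ ⨆ y : Set.Icc (-B) B, |f y.1 - T y.1|)
    (hext : ∀ x ∈ Set.Icc (-B) B, |f x - S x| = E → R x = S x) :
    ∀ x ∈ Set.Icc (-B) B, R x = S x := by
  have hcont := bdd B n m f hf S hS
  obtain ⟨P, Q, hP, hQ, hQ0, hRe⟩ := pos_rep B n m R hR
  obtain ⟨P0, Q0, hc, hP0, hQ0', hQ0pos, hSe⟩ := coprime_rep B hB n m S hS
  have iff1 : ∀ x ∈ Set.Icc (-B) B, R x = S x ↔ (P * Q0 - Q * P0).eval x = 0 := by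
    intro x hx
    rw [hRe x hx, hSe x hx, div_eq_div_iff (hQ0 x hx).ne' (hQ0pos x hx).ne', eval_sub, eval_mul,
      eval_mul, sub_eq_zero, mul_comm (P0.eval x)]
  by_cases hG : P * Q0 - Q * P0 = 0
  · intro x hx
    rw [iff1 x hx, hG, eval_zero]
  exfalso
  have hQ0ne : Q0 ≠ 0 := by
    rintro rfl
    have := hQ0pos 0 ⟨by linarith, hB.le⟩
    simp at this
  classical
  set T := (P * Q0 - Q * P0).roots.toFinset with hT
  have hTcard : T.card ≤ (P * Q0 - Q * P0).natDegree :=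
    (Multiset.toFinset_card_le _).trans (card_roots' _)
  set h := Lagrange.interpolate T id (fun x => f x - S x) with hh
  have hdeg : h.natDegree ≤ (P * Q0 - Q * P0).natDegree := by
    refine le_trans ?_ hTcard
    apply natDegree_le_of_degree_le
    exact (Lagrange.degree_interpolate_lt _ (Function.injective_id.injOn)).le
  obtain ⟨p, q, hp, hq, hpq⟩ := bezout_deg2 P0 Q0 P Q h n m hc hQ0ne hP0 hQ0' hP hQ hdeg
  obtain ⟨ε, h1, h2⟩ := perturb (K := Set.Icc (-B) B) (fun y => f y.1 - S y.1)
    (fun y => h.eval y.1) (fun y => Q0.eval y.1) (fun y => q.eval y.1) hcont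
    (h.continuous.comp continuous_subtype_val) (Q0.continuous.comp continuous_subtype_val)
    (q.continuous.comp continuous_subtype_val) (fun y => hQ0pos y.1 y.2) E
    (fun y => hSE y.1 y.2) (by
      rintro ⟨x, hx⟩ he
      have hxT : x ∈ T := by
        rw [hT, Multiset.mem_toFinset, mem_roots hG]
        exact (iff1 x hx).1 (hext x hx he)
      have : h.eval x = f x - S x := by
        have := Lagrange.eval_interpolate_at_node (fun x => f x - S x)
          (Function.injective_id.injOn (s := (T : Set ℝ))) hxT
        exact this
      simp only at he ⊢
      rw [this]
      have : f x - S x ≠ 0 := by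
        intro h0; rw [h0, abs_zero] at he; exact hE.ne he
      exact mul_self_pos.mpr this)
  have hT' : IsRatFun (-B) B n m (fun x => (P0 + C ε * p).eval x / (Q0 + C ε * q).eval x) := by
    refine ⟨P0 + C ε * p, Q0 + C ε * q, ?_, ?_, ?_, fun x hx => rfl⟩
    · exact natDegree_add_le_of_degree_le hP0 ((natDegree_C_mul_le _ _).trans hp)
    · exact natDegree_add_le_of_degree_le hQ0' ((natDegree_C_mul_le _ _).trans hq)
    · intro x hx
      have := h1 ⟨x, hx⟩
      simp only [eval_add, eval_mul, eval_C]
      exact this.ne'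
  have hb := hbest _ hT'
  have hcT := (bdd B n m f hf _ hT').abs
  have : Nonempty (Set.Icc (-B) B) := ⟨⟨0, by linarith, hB.le⟩⟩
  obtain ⟨y, -, hy⟩ := isCompact_univ.exists_isMaxOn Set.univ_nonempty hcT.continuousOn
  have hle := ciSup_le (isMaxOn_univ_iff.mp hy)
  have hlt := h2 y
  have hfin := hb.trans hle
  have h3 := hQ0pos y.1 y.2
  have h4 := h1 y
  have : f y.1 - (P0 + C ε * p).eval y.1 / (Q0 + C ε * q).eval y.1 = 
      (f y.1 - S y.1) - ε * (h.eval y.1 / (Q0.eval y.1 * (Q0.eval y.1 + ε * q.eval y.1))) := by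
    rw [hSe y.1 y.2, hpq]
    simp only [eval_add, eval_mul, eval_C, eval_sub]
    have h3' := h3.ne'
    have h4' := h4.ne'
    field_simp
    ring
  beta_reduce at hfin hlt
  rw [this] at hfin
  linarith

open Polynomial in
/-- Best rational approximants to odd functions are odd. -/
theorem best_approx_of_odd_is_odd
    (B : ℝ) (hB : 0 < B) (f : ℝ → ℝ) (hf : ContinuousOn f (Set.Icc (-B) B))
    (hfodd : ∀ x ∈ Set.Icc (-B) B, f (-x) = -f x)
    (m n : ℕ) (R : ℝ → ℝ) (hR : IsBestApprox (-B) B n m f R) :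
    ∀ x ∈ Set.Icc (-B) B, R (-x) = -R x := by
  obtain ⟨hRr, hbest⟩ := hR
  have hc := (bdd B n m f hf R hRr).abs
  have hle : ∀ x ∈ Set.Icc (-B) B, |f x - R x| ≤ ⨆ y : Set.Icc (-B) B, |f y.1 - R y.1| :=
    fun x hx => le_ciSup (f := fun y : Set.Icc (-B) B => |f y.1 - R y.1|)
      (by simpa using (isCompact_range hc).bddAbove) ⟨x, hx⟩
  set E := ⨆ y : Set.Icc (-B) B, |f y.1 - R y.1| with hE
  have hneg : ∀ x ∈ Set.Icc (-B) B, -x ∈ Set.Icc (-B) B := 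
    fun x hx => ⟨by linarith [hx.2], by linarith [hx.1]⟩
  have hE0 : 0 ≤ E := (abs_nonneg _).trans (hle 0 ⟨by linarith, hB.le⟩)
  rcases hE0.eq_or_lt with h0 | hpos
  · have : ∀ x ∈ Set.Icc (-B) B, R x = f x := by
      intro x hx
      have := hle x hx
      rw [← h0] at this
      have := abs_nonpos_iff.mp this
      linarith
    intro x hx
    rw [this x hx, this _ (hneg x hx), hfodd x hx]
  obtain ⟨P, Q, hP, hQ, hQpos, hRe⟩ := pos_rep B n m R hRr
  have cx : ∀ p : ℝ[X], (p.comp (-X)).natDegree = p.natDegree := by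
    intro p; simp [natDegree_comp]
  set S : ℝ → ℝ := fun x => (P.eval x - P.eval (-x)) / (Q.eval x + Q.eval (-x)) with hS
  have hSr : IsRatFun (-B) B n m S := by
    refine ⟨P - P.comp (-X), Q + Q.comp (-X), ?_, ?_, ?_, ?_⟩
    · exact (natDegree_sub_le _ _).trans (max_le hP ((cx P).le.trans hP))
    · exact natDegree_add_le_of_degree_le hQ ((cx Q).le.trans hQ)
    · intro x hx
      have := hQpos x hx
      have := hQpos _ (hneg x hx)
      simp only [eval_add, eval_comp, eval_neg, eval_X]
      positivity
    · intro x hx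
      simp [hS]
  -- the weighted average identity
  have havg : ∀ x ∈ Set.Icc (-B) B, (Q.eval x + Q.eval (-x)) * (f x - S x) =
      Q.eval x * (f x - R x) + Q.eval (-x) * (-(f (-x) - R (-x))) := by
    intro x hx
    have h1 := hQpos x hx
    have h2 := hQpos _ (hneg x hx)
    rw [hfodd x hx, hRe x hx, hRe _ (hneg x hx)]
    simp only [hS]
    field_simp
    ring
  have hSE : ∀ x ∈ Set.Icc (-B) B, |f x - S x| ≤ E := by
    intro x hx
    have h1 := hQpos x hx
    have h2 := hQpos _ (hneg x hx)
    have h3 := abs_le.mp (hle x hx)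
    have h4 := abs_le.mp (hle _ (hneg x hx))
    have h5 := havg x hx
    rw [abs_le]
    constructor
    · refine le_of_mul_le_mul_left ?_ (add_pos h1 h2)
      rw [h5]; nlinarith
    · refine le_of_mul_le_mul_left ?_ (add_pos h1 h2)
      rw [h5]; nlinarith
  have hext : ∀ x ∈ Set.Icc (-B) B, |f x - S x| = E → R x = S x := by
    intro x hx he
    have h1 := hQpos x hx
    have h2 := hQpos _ (hneg x hx)
    have h3 := abs_le.mp (hle x hx)
    have h4 := abs_le.mp (hle _ (hneg x hx))
    have h5 := havg x hx
    have : f x - R x = f x - S x := by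
      rcases (abs_eq hE0).mp he with h | h
      · rw [h] at h5 ⊢
        refine le_antisymm h3.2 (le_of_mul_le_mul_left ?_ h1)
        nlinarith
      · rw [h] at h5 ⊢
        refine le_antisymm (le_of_mul_le_mul_left ?_ h1) h3.1
        nlinarith
    linarith
  have hfinal := key_lemma B hB f hf m n R S hRr hSr E hpos hSE hbest hext
  intro x hx
  rw [hfinal x hx, hfinal _ (hneg x hx)]
  simp only [hS, neg_neg]
  rw [← neg_div, add_comm (Q.eval (-x))]
  ring
end
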